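/- Let V : ℝ³ → S² define a line fibration of ℝ³ such that α = V₁dx + V₂dy + V₃dz is a contact form, and suppose every line of the fibration has a distinct parallel line in the fibration. Then after an affine change of coordinates, V(x,y,z) = (cos θ(z), −sin θ(z), 0) for some smooth θ : ℝ → ℝ with θ(0) = 0 and θ'(z) ≠ 0 for all z; consequently ker α is diffeomorphic to the standard contact structure ker(dz + x dy). -/

import Mathlib

open Real

noncomputable section

/-- Points/vectors of `ℝ³`. -/
abbrev E3 : Type := ℝ × ℝ × ℝ

/-- The Euclidean dot product on `ℝ³`. -/
def dot3 (a b : E3) : ℝ := a.1 * b.1 + a.2.1 * b.2.1 + a.2.2 * b.2.2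

def e1 : E3 := (1, 0, 0)
def e2 : E3 := (0, 1, 0)
def e3 : E3 := (0, 0, 1)

/-- The value of the 2-form `dα` at `p` on vectors `u, v`, where
`α = V₁ dx + V₂ dy + V₃ dz`, i.e. `α_p(u) = ⟨V(p), u⟩`. -/
def dAlpha (V : E3 → E3) (p u v : E3) : ℝ :=
  dot3 (fderiv ℝ V p u) v - dot3 (fderiv ℝ V p v) u

/-- The value of the 3-form `α ∧ dα` at `p` on the standard basis of `ℝ³`;
`α ∧ dα ≠ 0` at `p` iff this number is nonzero. -/
def wedge (V : E3 → E3) (p : E3) : ℝ :=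
  dot3 (V p) e1 * dAlpha V p e2 e3
    - dot3 (V p) e2 * dAlpha V p e1 e3
    + dot3 (V p) e3 * dAlpha V p e1 e2

/-- The curl of the vector field `V` at `p`. -/
def curl (V : E3 → E3) (p : E3) : E3 :=
  ((fderiv ℝ V p e2).2.2 - (fderiv ℝ V p e3).2.1,
   (fderiv ℝ V p e3).1 - (fderiv ℝ V p e1).2.2,
   (fderiv ℝ V p e1).2.1 - (fderiv ℝ V p e2).1)

/-- The line through `p` in direction `V p`. -/
def line (V : E3 → E3) (p : E3) : Set E3 := {q | ∃ t : ℝ, q = p + t • V p}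

/-- `V` defines a line fibration of `ℝ³`: it is a unit vector field whose lines
are pairwise equal or disjoint (they automatically cover `ℝ³`). -/
def IsLineFibration (V : E3 → E3) : Prop :=
  (∀ p, dot3 (V p) (V p) = 1) ∧
    ∀ p q, line V p = line V q ∨ line V p ∩ line V q = ∅

def cross3 (a b : E3) : E3 :=
  (a.2.1 * b.2.2 - a.2.2 * b.2.1, a.2.2 * b.1 - a.1 * b.2.2, a.1 * b.2.1 - a.2.1 * b.1)

def det3 (a b c : E3) : ℝ := dot3 (cross3 a b) c

lemma dot3_comm (a b : E3) : dot3 a b = dot3 b a := by simp only [dot3]; ring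
lemma dot3_add_left (a b c : E3) : dot3 (a + b) c = dot3 a c + dot3 b c := by
  simp [dot3]; ring
lemma dot3_add_right (a b c : E3) : dot3 a (b + c) = dot3 a b + dot3 a c := by
  simp [dot3]; ring
lemma dot3_smul_left (t : ℝ) (a c : E3) : dot3 (t • a) c = t * dot3 a c := by
  simp [dot3]; ring
lemma dot3_smul_right (t : ℝ) (a c : E3) : dot3 a (t • c) = t * dot3 a c := by
  simp [dot3]; ring
lemma dot3_neg_left (a c : E3) : dot3 (-a) c = - dot3 a c := by
  simp [dot3]; ring
lemma dot3_sub_left (a b c : E3) : dot3 (a - b) c = dot3 a c - dot3 b c := by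
  simp [dot3]; ring
lemma dot3_zero_left (c : E3) : dot3 0 c = 0 := by simp [dot3]
lemma dot3_zero_right (c : E3) : dot3 c 0 = 0 := by simp [dot3]

lemma dot3_self_eq_zero {a : E3} (h : dot3 a a = 0) : a = 0 := by
  obtain ⟨a1, a2, a3⟩ := a
  simp only [dot3] at h
  have h1 : a1 = 0 := by nlinarith [sq_nonneg a1, sq_nonneg a2, sq_nonneg a3]
  have h2 : a2 = 0 := by nlinarith [sq_nonneg a1, sq_nonneg a2, sq_nonneg a3]
  have h3 : a3 = 0 := by nlinarith [sq_nonneg a1, sq_nonneg a2, sq_nonneg a3]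
  subst h1 h2 h3; rfl

lemma contDiff_dot3 {E : Type*} [NormedAddCommGroup E] [NormedSpace ℝ E] {n : WithTop ℕ∞}
    {f g : E → E3} (hf : ContDiff ℝ n f) (hg : ContDiff ℝ n g) :
    ContDiff ℝ n (fun x => dot3 (f x) (g x)) := by
  unfold dot3; fun_prop

lemma continuous_dot3 {E : Type*} [TopologicalSpace E]
    {f g : E → E3} (hf : Continuous f) (hg : Continuous g) :
    Continuous (fun x => dot3 (f x) (g x)) := by
  unfold dot3; fun_prop

lemma continuous_det3 {E : Type*} [TopologicalSpace E]
    {f g h : E → E3} (hf : Continuous f) (hg : Continuous g) (hh : Continuous h) :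
    Continuous (fun x => det3 (f x) (g x) (h x)) := by
  unfold det3 dot3 cross3; fun_prop

/-- unit vectors with zero cross product agree up to sign -/
lemma par_of_cross {v w : E3} (hv : dot3 v v = 1) (hw : dot3 w w = 1) (h : cross3 v w = 0) :
    w = v ∨ w = -v := by
  obtain ⟨a, b, c⟩ := v
  obtain ⟨x, y, z⟩ := w
  simp only [cross3, dot3, Prod.mk_eq_zero] at *
  obtain ⟨h1, h2, h3⟩ := h
  have ht : (a * x + b * y + c * z) ^ 2 = 1 := by
    linear_combination (x^2+y^2+z^2) * hv + hw - (b*z-c*y) * h1 - (c*x-a*z) * h2 - (a*y-b*x) * h3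
  set t := a * x + b * y + c * z with htd
  have e1 : x = t * a := by rw [htd]; linear_combination -x * hv + c * h2 - b * h3
  have e2 : y = t * b := by rw [htd]; linear_combination -y * hv - c * h1 + a * h3
  have e3 : z = t * c := by rw [htd]; linear_combination -z * hv + b * h1 - a * h2
  clear_value t
  have hm : (t - 1) * (t + 1) = 0 := by linear_combination ht
  have ht' : t = 1 ∨ t = -1 := by
    rcases mul_eq_zero.mp hm with h | h
    · left; linarith
    · right; linarith
  rcases ht' with h | h
  · left; rw [e1, e2, e3, h]; simp
  · right; rw [e1, e2, e3, h]; simp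

lemma coplanar {V : E3 → E3} (hfib : IsLineFibration V) {p q : E3}
    (h : det3 (V p) (q - p) (V q) = 0) : V q = V p ∨ V q = -V p := by
  obtain ⟨hu, hl⟩ := hfib
  by_cases hx : cross3 (V p) (V q) = 0
  · exact par_of_cross (hu p) (hu q) hx
  exfalso
  apply hx
  set v := V p with hv
  set w := V q with hw
  set d := q - p with hd
  set x := cross3 v w with hxd
  have hX : dot3 x x ≠ 0 := fun h0 => hx (dot3_self_eq_zero h0)
  have hdx : dot3 d x = 0 := by
    rw [hxd]; simp only [det3, cross3, dot3] at h ⊢; linear_combination -h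
  have key : dot3 x x • d = dot3 (cross3 d w) x • v + dot3 (cross3 v d) x • w + dot3 d x • x := by
    rw [hxd]
    ext <;> simp [cross3, dot3] <;> ring
  rw [hdx, zero_smul, add_zero] at key
  obtain ⟨α, β, hab⟩ : ∃ α β : ℝ, d = α • v + β • w := by
    refine ⟨(dot3 x x)⁻¹ * dot3 (cross3 d w) x, (dot3 x x)⁻¹ * dot3 (cross3 v d) x, ?_⟩
    rw [mul_smul, mul_smul, ← smul_add, ← key, smul_smul, inv_mul_cancel₀ hX, one_smul]
  have hq : q = p + α • v + β • w := by
    have : q = p + d := by rw [hd]; abel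
    rw [this, hab]; abel
  have hne : (line V p ∩ line V q).Nonempty := by
    refine ⟨p + α • v, ⟨α, rfl⟩, ⟨-β, ?_⟩⟩
    rw [← hw, hq]; simp
  have heq : line V p = line V q := by
    rcases hl p q with h1 | h1
    · exact h1
    · rw [h1] at hne; exact absurd hne (by simp)
  have h1 : p ∈ line V q := heq ▸ (⟨0, by simp⟩ : p ∈ line V p)
  have h2 : p + v ∈ line V q := heq ▸ (⟨1, by simp [hv]⟩ : p + v ∈ line V p)
  obtain ⟨s, hs⟩ := h1
  obtain ⟨t, ht⟩ := h2
  have : v = (t - s) • w := by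
    have h3 : v = (p + v) - p := by abel
    have h4 : (p + v) - p = (q + t • V q) - (q + s • V q) := by rw [← ht, ← hs]
    rw [h3, h4, sub_smul]; abel
  rw [hxd, this]
  ext <;> simp [cross3] <;> ring

lemma dV_unit {V : E3 → E3} (hV : Differentiable ℝ V) (hu : ∀ p, dot3 (V p) (V p) = 1)
    (p u : E3) : dot3 (V p) (fderiv ℝ V p u) = 0 := by
  have h := (hV p).hasFDerivAt
  have h1 := h.fst
  have h2 := h.snd.fst
  have h3 := h.snd.snd
  have h4 := ((h1.mul h1).add (h2.mul h2)).add (h3.mul h3)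
  have h5 : HasFDerivAt (fun x => dot3 (V x) (V x)) (0 : E3 →L[ℝ] ℝ) p := by
    simp only [hu]; exact hasFDerivAt_const _ _
  have h6 := DFunLike.congr_fun (h4.unique h5) u
  simp at h6
  simp only [dot3]
  linarith

lemma pos_near {V : E3 → E3} (hV : Continuous V) (hu : ∀ p, dot3 (V p) (V p) = 1)
    (p : E3) : ∀ᶠ x in nhds p, V x ≠ -V p := by
  have h : ContinuousAt (fun x => dot3 (V x) (V p)) p :=
    (continuous_dot3 hV continuous_const).continuousAt
  have : ∀ᶠ x in nhds p, 0 < dot3 (V x) (V p) := by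
    apply h.eventually_const_lt; simp [hu]
  filter_upwards [this] with x hx h0
  rw [h0, dot3_neg_left, hu] at hx
  linarith

lemma dV_self {V : E3 → E3} (hV : Differentiable ℝ V) (hfib : IsLineFibration V)
    (p : E3) : fderiv ℝ V p (V p) = 0 := by
  have hl : HasDerivAt (fun t : ℝ => p + t • V p) (V p) 0 := by
    simpa using ((hasDerivAt_id (0:ℝ)).smul_const (V p)).const_add p
  have h1 : HasDerivAt (fun t : ℝ => V (p + t • V p)) (fderiv ℝ V p (V p)) 0 := by
    have := (hV (p + (0:ℝ) • V p)).hasFDerivAt.comp_hasDerivAt (0:ℝ) hl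
    rw [zero_smul, add_zero] at this
    exact this
  have hc : Filter.Tendsto (fun t : ℝ => p + t • V p) (nhds 0) (nhds p) := by
    simpa using hl.continuousAt.tendsto
  have h2 : (fun t : ℝ => V (p + t • V p)) =ᶠ[nhds 0] fun _ => V p := by
    filter_upwards [hc.eventually (pos_near hV.continuous hfib.1 p)] with t ht
    have : det3 (V p) (p + t • V p - p) (V (p + t • V p)) = 0 := by
      simp [det3, cross3, dot3]; ring
    exact (coplanar hfib this).resolve_right ht
  exact h1.unique ((hasDerivAt_const (0:ℝ) (V p)).congr_of_eventuallyEq h2)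

lemma local_ne {V : E3 → E3} (hV : Differentiable ℝ V) (hu : ∀ p, dot3 (V p) (V p) = 1)
    (b z1 z0 : E3) (hz : fderiv ℝ V b z1 ≠ 0) :
    ∃ δ0 > (0:ℝ), ∀ δ, 0 < δ → δ < δ0 → ∀ᶠ ε : ℝ in nhdsWithin 0 (Set.Ioi 0),
      ∀ x ∈ Set.Icc (-δ) δ, V (b + ε • (z1 + x • z0)) ≠ V b ∧
        V (b + ε • (z1 + x • z0)) ≠ -V b := by
  set M := fderiv ℝ V b with hM
  have hμ : 0 < ‖M z1‖ := norm_pos_iff.mpr hz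
  set μ := ‖M z1‖ with hμd
  set R := ‖z1‖ + ‖z0‖ with hR
  have hR0 : 0 ≤ R := by positivity
  have hC : 0 < μ / (4 * (R + 1)) := by positivity
  set C := μ / (4 * (R + 1)) with hCd
  have hCR : C * (R + 1) = μ / 4 := by rw [hCd]; field_simp
  have h1 : ∀ᶠ h in nhds (0 : E3), ‖V (b + h) - V b - M h‖ ≤ C * ‖h‖ :=
    (hasFDerivAt_iff_isLittleO_nhds_zero.mp (hV b).hasFDerivAt).def hC
  have h2 : ∀ᶠ h in nhds (0 : E3), V (b + h) ≠ -V b := by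
    have : Filter.Tendsto (fun h : E3 => b + h) (nhds 0) (nhds b) := by
      have : Continuous (fun h : E3 => b + h) := by fun_prop
      simpa using this.tendsto 0
    exact this.eventually (pos_near hV.continuous hu b)
  obtain ⟨r, hr, hball⟩ := Metric.eventually_nhds_iff.mp (h1.and h2)
  refine ⟨min 1 (μ / (2 * (‖M z0‖ + 1))), by positivity, ?_⟩
  intro δ hδ hδ0
  have hδ1 : δ < 1 := lt_of_lt_of_le hδ0 (min_le_left _ _)
  have hδ2 : δ < μ / (2 * (‖M z0‖ + 1)) := lt_of_lt_of_le hδ0 (min_le_right _ _)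
  rw [lt_div_iff₀ (by positivity)] at hδ2
  have hr' : 0 < r / (R + 1) := by positivity
  filter_upwards [Ioo_mem_nhdsGT hr'] with ε hε x hx
  obtain ⟨hε0, hε1⟩ := hε
  rw [lt_div_iff₀ (by positivity)] at hε1
  have hxa : |x| ≤ δ := abs_le.mpr hx
  have hn : ‖z1 + x • z0‖ ≤ R := by
    calc ‖z1 + x • z0‖ ≤ ‖z1‖ + ‖x • z0‖ := norm_add_le _ _
      _ ≤ ‖z1‖ + ‖z0‖ := by
        rw [norm_smul, Real.norm_eq_abs]
        have := mul_le_of_le_one_left (norm_nonneg z0) (hxa.trans hδ1.le)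
        linarith
  have hy : ‖ε • (z1 + x • z0)‖ ≤ ε * R := by
    rw [norm_smul, Real.norm_eq_abs, abs_of_pos hε0]
    exact mul_le_mul_of_nonneg_left hn hε0.le
  obtain ⟨ha, hb⟩ := hball (y := ε • (z1 + x • z0)) (by
    rw [dist_zero_right]; nlinarith)
  refine ⟨fun h0 => ?_, hb⟩
  rw [h0, sub_self, zero_sub, norm_neg, map_smul, norm_smul, Real.norm_eq_abs, abs_of_pos hε0] at ha
  have hlow : μ / 2 ≤ ‖M (z1 + x • z0)‖ := by
    have e : M z1 = M (z1 + x • z0) - x • M z0 := by simp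
    have : μ ≤ ‖M (z1 + x • z0)‖ + ‖x • M z0‖ := by rw [hμd, e]; exact norm_sub_le _ _
    rw [norm_smul, Real.norm_eq_abs] at this
    have h3 : |x| * ‖M z0‖ ≤ δ * ‖M z0‖ := mul_le_mul_of_nonneg_right hxa (norm_nonneg _)
    nlinarith
  have h4 : ε * (μ / 2) ≤ C * (ε * R) :=
    (mul_le_mul_of_nonneg_left hlow hε0.le).trans (ha.trans (mul_le_mul_of_nonneg_left hy hC.le))
  have h5 : C * R ≤ μ / 4 := by nlinarith
  nlinarith

lemma const_sign {f : ℝ → ℝ} (hf : Continuous f) {δ : ℝ} (hδ : 0 < δ)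
    (h : ∀ x ∈ Set.Icc (-δ) δ, f x ≠ 0) : 0 < f δ * f (-δ) := by
  by_contra hcon
  have hle : -δ ≤ δ := by linarith
  have h1 := h δ ⟨hle, le_rfl⟩
  have h2 := h (-δ) ⟨le_rfl, hle⟩
  have h0 : (0:ℝ) ∈ Set.uIcc (f (-δ)) (f δ) := by
    rw [Set.mem_uIcc]
    rcases lt_or_gt_of_ne h1 with a | a <;> rcases lt_or_gt_of_ne h2 with c | c
    · exact absurd (mul_pos_of_neg_of_neg a c) hcon
    · right; exact ⟨a.le, c.le⟩
    · left; exact ⟨c.le, a.le⟩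
    · exact absurd (mul_pos a c) hcon
  obtain ⟨x, hx, hx0⟩ := intermediate_value_uIcc (hf.continuousOn) h0
  rw [Set.uIcc_of_le hle] at hx
  exact h x hx hx0

lemma det3_par {v w V' : E3} (h : V' = v ∨ V' = -v) : det3 v w V' = 0 := by
  rcases h with h | h <;> rw [h] <;> simp [det3, cross3, dot3] <;> ring

lemma slope_tendsto {V : E3 → E3} (hV : Differentiable ℝ V) (b z : E3) :
    Filter.Tendsto (fun ε : ℝ => ε⁻¹ • (V (b + ε • z) - V b)) (nhdsWithin 0 (Set.Ioi 0))
      (nhds (fderiv ℝ V b z)) := by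
  have hl : HasDerivAt (fun t : ℝ => b + t • z) z 0 := by
    simpa using ((hasDerivAt_id (0:ℝ)).smul_const z).const_add b
  have h1 : HasDerivAt (fun t : ℝ => V (b + t • z)) (fderiv ℝ V b z) 0 := by
    have := (hV (b + (0:ℝ) • z)).hasFDerivAt.comp_hasDerivAt (0:ℝ) hl
    rw [zero_smul, add_zero] at this
    exact this
  have := h1.tendsto_slope_zero_right
  simpa using this

lemma sign_ev {V : E3 → E3} (hV : Differentiable ℝ V) (hfib : IsLineFibration V)
    (a b z1 z0 : E3) (hab : V b = V a ∨ V b = -V a) (hz : fderiv ℝ V b z1 ≠ 0) :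
    ∃ δ0 > (0:ℝ), ∀ δ, 0 < δ → δ < δ0 → ∀ᶠ ε : ℝ in nhdsWithin 0 (Set.Ioi 0),
      0 < det3 (V a) (b - a + ε • (z1 + δ • z0)) (ε⁻¹ • (V (b + ε • (z1 + δ • z0)) - V b)) *
        det3 (V a) (b - a + ε • (z1 + (-δ) • z0))
          (ε⁻¹ • (V (b + ε • (z1 + (-δ) • z0)) - V b)) := by
  obtain ⟨δ0, h0, H⟩ := local_ne hV hfib.1 b z1 z0 hz
  refine ⟨δ0, h0, fun δ hδ hδ0 => ?_⟩
  filter_upwards [H δ hδ hδ0, self_mem_nhdsWithin] with ε hε hε0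
  have hε0 : 0 < ε := hε0
  set f : ℝ → ℝ := fun x =>
    det3 (V a) (b - a + ε • (z1 + x • z0)) (ε⁻¹ • (V (b + ε • (z1 + x • z0)) - V b)) with hf
  have hfc : Continuous f := by
    have := hV.continuous
    apply continuous_det3 <;> fun_prop
  apply const_sign hfc hδ
  intro x hx hfx
  obtain ⟨g1, g2⟩ := hε x hx
  have hd := det3_par (w := b - a + ε • (z1 + x • z0)) hab
  have hd2 : det3 (V a) ((b + ε • (z1 + x • z0)) - a) (V (b + ε • (z1 + x • z0))) = 0 := by
    have e : (b + ε • (z1 + x • z0)) - a = b - a + ε • (z1 + x • z0) := by abel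
    rw [e]
    simp only [hf] at hfx
    have e2 : ∀ X Y A B : E3, det3 A B (ε⁻¹ • (X - Y)) = ε⁻¹ * (det3 A B X - det3 A B Y) := by
      intro X Y A B; simp [det3, dot3]; ring
    rw [e2, hd, sub_zero] at hfx
    exact (mul_eq_zero.mp hfx).resolve_left (inv_ne_zero hε0.ne')
  rcases coplanar hfib hd2 with h | h <;> rcases hab with h' | h' <;> rw [h'] at g1 g2 <;>
    simp_all

lemma tendsto_det3 {l : Filter ℝ} {f g : ℝ → E3} {v x y : E3} (hf : Filter.Tendsto f l (nhds x))
    (hg : Filter.Tendsto g l (nhds y)) :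
    Filter.Tendsto (fun t => det3 v (f t) (g t)) l (nhds (det3 v x y)) := by
  have hc : Continuous (fun q : E3 × E3 => det3 v q.1 q.2) := by
    apply continuous_det3 <;> fun_prop
  have h1 : Filter.Tendsto (fun t => (f t, g t)) l (nhds (x, y)) := hf.prodMk_nhds hg
  have h2 := Filter.Tendsto.comp (hc.tendsto (x, y)) h1
  exact h2

lemma U1 {V : E3 → E3} (hV : Differentiable ℝ V) (hfib : IsLineFibration V)
    (a b z1 z0 : E3) (hab : V b = V a ∨ V b = -V a) (hz : fderiv ℝ V b z1 ≠ 0)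
    (hL : det3 (V a) (b - a) (fderiv ℝ V b z1) = 0) :
    det3 (V a) (b - a) (fderiv ℝ V b z0) = 0 := by
  obtain ⟨δ0, h0, H⟩ := sign_ev hV hfib a b z1 z0 hab hz
  have hlim : ∀ z : E3, Filter.Tendsto (fun ε : ℝ => det3 (V a) (b - a + ε • z)
      (ε⁻¹ • (V (b + ε • z) - V b))) (nhdsWithin 0 (Set.Ioi 0))
      (nhds (det3 (V a) (b - a) (fderiv ℝ V b z))) := by
    intro z
    apply tendsto_det3 _ (slope_tendsto hV b z)
    have : Continuous (fun ε : ℝ => b - a + ε • z) := by fun_prop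
    simpa using (this.tendsto 0).mono_left nhdsWithin_le_nhds
  have h1 := ge_of_tendsto ((hlim (z1 + (δ0/2) • z0)).mul (hlim (z1 + (-(δ0/2)) • z0)))
    ((H (δ0/2) (by linarith) (by linarith)).mono fun _ h => h.le)
  set M := fderiv ℝ V b with hM
  have e2 : ∀ t : ℝ, det3 (V a) (b - a) (M (z1 + t • z0)) = t * det3 (V a) (b - a) (M z0) := by
    intro t
    have e3 : ∀ X Y A B : E3, det3 A B (X + t • Y) = det3 A B X + t * det3 A B Y := by
      intro X Y A B; simp [det3, dot3]; ring
    rw [map_add, map_smul, e3, hL, zero_add]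
  rw [e2, e2] at h1
  have h3 : (δ0 / 2)^2 * (det3 (V a) (b - a) (M z0))^2 ≤ 0 := by nlinarith
  have h4 : (det3 (V a) (b - a) (M z0))^2 ≤ 0 := by
    by_contra hh; push Not at hh
    have : 0 < (δ0 / 2)^2 * (det3 (V a) (b - a) (M z0))^2 := by positivity
    linarith
  nlinarith

lemma U2 {V : E3 → E3} (hV : Differentiable ℝ V) (hfib : IsLineFibration V)
    (b z1 z0 : E3) (hz : fderiv ℝ V b z1 ≠ 0)
    (hL : det3 (V b) z1 (fderiv ℝ V b z1) = 0) (hQ : det3 (V b) z0 (fderiv ℝ V b z0) = 0) :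
    det3 (V b) z0 (fderiv ℝ V b z1) + det3 (V b) z1 (fderiv ℝ V b z0) = 0 := by
  obtain ⟨δ0, h0, H⟩ := sign_ev hV hfib b b z1 z0 (Or.inl rfl) hz
  have hlim : ∀ z : E3, Filter.Tendsto (fun ε : ℝ => det3 (V b) z
      (ε⁻¹ • (V (b + ε • z) - V b))) (nhdsWithin 0 (Set.Ioi 0))
      (nhds (det3 (V b) z (fderiv ℝ V b z))) := by
    intro z
    exact tendsto_det3 tendsto_const_nhds (slope_tendsto hV b z)
  have h1 := ge_of_tendsto (b := 0) ((hlim (z1 + (δ0/2) • z0)).mul (hlim (z1 + (-(δ0/2)) • z0)))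
    (by
      filter_upwards [H (δ0/2) (by linarith) (by linarith), self_mem_nhdsWithin] with ε h hε0
      have hε0 : 0 < ε := hε0
      have e3 : ∀ Y A B : E3, det3 A (b - b + ε • B) Y = ε * det3 A B Y := by
        intro Y A B; simp [det3, dot3, cross3]; ring
      rw [e3, e3] at h
      by_contra hh; push Not at hh
      nlinarith [mul_pos hε0 hε0])
  set M := fderiv ℝ V b with hM
  have e2 : ∀ t : ℝ, det3 (V b) (z1 + t • z0) (M (z1 + t • z0)) =
      t * (det3 (V b) z0 (M z1) + det3 (V b) z1 (M z0)) := by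
    intro t
    have e3 : ∀ A : E3, det3 A (z1 + t • z0) (M z1 + t • M z0) = det3 A z1 (M z1) +
       t * (det3 A z0 (M z1) + det3 A z1 (M z0)) + t^2 * det3 A z0 (M z0) := by
      intro A; simp [det3, dot3, cross3]; ring
    rw [map_add, map_smul, e3, hL, hQ]; ring
  rw [e2, e2] at h1
  set B := det3 (V b) z0 (M z1) + det3 (V b) z1 (M z0)
  have h3 : (δ0 / 2)^2 * B^2 ≤ 0 := by nlinarith
  have h4 : B^2 ≤ 0 := by
    by_contra hh; push Not at hh
    have : 0 < (δ0 / 2)^2 * B^2 := by positivity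
    linarith
  nlinarith

lemma exists_repr (φ : E3 →ₗ[ℝ] ℝ) : ∃ m : E3, ∀ u, φ u = dot3 m u := by
  refine ⟨(φ e1, φ e2, φ e3), fun u => ?_⟩
  have : u = u.1 • e1 + u.2.1 • e2 + u.2.2 • e3 := by
    ext <;> simp [e1, e2, e3]
  conv_lhs => rw [this]
  simp [dot3]; ring

lemma triple_id (r y : E3) : dot3 r r • y = dot3 r y • r + cross3 (cross3 r y) r := by
  ext <;> simp [dot3, cross3] <;> ring

lemma cross3_cross3 (a b c : E3) : cross3 (cross3 a b) c = dot3 a c • b - dot3 b c • a := by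
  ext <;> simp [dot3, cross3] <;> ring

lemma cross3_zero_left (c : E3) : cross3 0 c = 0 := by
  ext <;> simp [cross3]

lemma lagrange_id (a b : E3) : dot3 (cross3 a b) (cross3 a b) =
    dot3 a a * dot3 b b - dot3 a b ^ 2 := by
  simp [dot3, cross3] ; ring

lemma rank_one {V : E3 → E3} (hV : Differentiable ℝ V) (hfib : IsLineFibration V)
    (hpar : ∀ p : E3, ∃ q : E3, line V q ≠ line V p ∧ (V q = V p ∨ V q = -V p)) (p : E3) :
    ∃ m r : E3, ∀ u, fderiv ℝ V p u = dot3 m u • r := by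
  obtain ⟨q, hq, hqp⟩ := hpar p
  have hpq : V p = V q ∨ V p = -V q := by
    rcases hqp with h | h
    · exact Or.inl h.symm
    · right; rw [h, neg_neg]
  set v := V q with hv
  set M := fderiv ℝ V p with hM
  set x := cross3 v (p - q) with hx
  have hvv : dot3 v v = 1 := hfib.1 q
  have hx0 : x ≠ 0 := by
    intro h0
    apply hq
    have h1 : cross3 x v = 0 := by rw [h0, cross3_zero_left]
    rw [hx, cross3_cross3, hvv, one_smul, sub_eq_zero] at h1
    refine ((hfib.2 q p).resolve_right fun h2 => ?_)
    have h3 : p ∈ line V q ∩ line V p :=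
      ⟨⟨dot3 (p - q) v, by rw [← hv, ← h1]; abel⟩, ⟨0, by simp⟩⟩
    rw [h2] at h3; exact h3
  have hvx : dot3 v x = 0 := by simp only [hx, dot3, cross3]; ring
  have hxx : dot3 x x ≠ 0 := fun h => hx0 (dot3_self_eq_zero h)
  have hMv : ∀ u, dot3 v (M u) = 0 := by
    intro u
    have := dV_unit hV hfib.1 p u
    rcases hpq with h | h
    · rwa [h] at this
    · rw [h, dot3_neg_left] at this; linarith
  by_cases hL : ∀ u, det3 v (p - q) (M u) = 0
  · set r := cross3 v x with hr
    have hrr : dot3 r r ≠ 0 := by rw [hr, lagrange_id, hvv, hvx]; simpa using hxx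
    let φ : E3 →ₗ[ℝ] ℝ :=
      { toFun := fun u => (dot3 r r)⁻¹ * dot3 r (M u)
        map_add' := by intro a b; rw [map_add, dot3_add_right]; ring
        map_smul' := by intro a b; rw [map_smul, dot3_smul_right]; simp; ring }
    obtain ⟨m, hm⟩ := exists_repr φ
    refine ⟨m, r, fun u => ?_⟩
    rw [← hm]
    show M u = ((dot3 r r)⁻¹ * dot3 r (M u)) • r
    have h1 := triple_id r (M u)
    have h2 : cross3 r (M u) = 0 := by
      have h3 : dot3 x (M u) = 0 := hL u
      rw [hr, cross3_cross3, h3, hMv u]; simp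
    rw [h2, cross3_zero_left, add_zero] at h1
    rw [mul_smul, ← h1, smul_smul, inv_mul_cancel₀ hrr, one_smul]
  · push Not at hL
    obtain ⟨z0, hz0⟩ := hL
    have h1 : ∀ z, det3 v (p - q) (M z) = 0 → M z = 0 := by
      intro z hz
      by_contra hne
      exact hz0 (U1 hV hfib q p z z0 hpq hne hz)
    let φ : E3 →ₗ[ℝ] ℝ :=
      { toFun := fun u => (det3 v (p - q) (M z0))⁻¹ * det3 v (p - q) (M u)
        map_add' := by intro a b; rw [map_add, det3, det3, dot3_add_right, det3, det3]; ring
        map_smul' := by intro a b; rw [map_smul, det3, det3, dot3_smul_right, det3]; simp; ring }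
    obtain ⟨m, hm⟩ := exists_repr φ
    refine ⟨m, M z0, fun u => ?_⟩
    rw [← hm]
    show M u = ((det3 v (p - q) (M z0))⁻¹ * det3 v (p - q) (M u)) • M z0
    set c := (det3 v (p - q) (M z0))⁻¹ * det3 v (p - q) (M u) with hc
    have h2 : M (u - c • z0) = 0 := by
      apply h1
      have e3 : ∀ X Y A B : E3, det3 A B (X - c • Y) = det3 A B X - c * det3 A B Y := by
        intro X Y A B; simp [det3, dot3]; ring
      rw [map_sub, map_smul, e3, hc]
      field_simp; ring
    rw [map_sub, map_smul, sub_eq_zero] at h2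
    exact h2

lemma structure_thm {V : E3 → E3} (hV : Differentiable ℝ V) (hfib : IsLineFibration V)
    (hcontact : ∀ p : E3, wedge V p ≠ 0)
    (hpar : ∀ p : E3, ∃ q : E3, line V q ≠ line V p ∧ (V q = V p ∨ V q = -V p)) (p : E3) :
    ∃ k : E3, dot3 k k = 1 ∧ dot3 (V p) k = 0 ∧
      ∀ u, fderiv ℝ V p u = (-wedge V p * dot3 (cross3 (V p) k) u) • k := by
  obtain ⟨m, r, hM⟩ := rank_one hV hfib hpar p
  set v := V p with hv
  have hw : wedge V p = dot3 v (cross3 m r) := by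
    simp only [wedge, dAlpha, hM, ← hv]
    simp [dot3, cross3, e1, e2, e3]; ring
  have hc := hcontact p
  set w := wedge V p with hwd
  have hvv : dot3 v v = 1 := hfib.1 p
  have hr : r ≠ 0 := by
    rintro rfl; apply hc; rw [hw]; simp [dot3, cross3]
  have hm : m ≠ 0 := by
    rintro rfl; apply hc; rw [hw]; simp [dot3, cross3]
  have hrr : dot3 r r ≠ 0 := fun h => hr (dot3_self_eq_zero h)
  have hmm : dot3 m m ≠ 0 := fun h => hm (dot3_self_eq_zero h)
  have hmv : dot3 m v = 0 := by
    have := dV_self hV hfib p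
    rw [hM] at this
    exact (smul_eq_zero.mp this).resolve_right hr
  have hvr : dot3 v r = 0 := by
    have := dV_unit hV hfib.1 p m
    rw [hM, dot3_smul_right] at this
    exact (mul_eq_zero.mp this).resolve_left hmm
  have hmr : dot3 m r = 0 := by
    by_contra hτ
    have hz0 : fderiv ℝ V p (cross3 v m) = 0 := by
      rw [hM]
      have : dot3 m (cross3 v m) = 0 := by simp only [dot3, cross3]; ring
      rw [this, zero_smul]
    have h := U2 hV hfib p r (cross3 v m) (by rw [hM]; exact smul_ne_zero hτ hr)
      (by rw [hM]; simp [det3, dot3, cross3]; ring)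
      (by rw [hz0]; simp [det3, dot3, cross3])
    rw [hz0, hM, ← hv, det3, det3, dot3_zero_right, add_zero, dot3_smul_right] at h
    have h2 := (mul_eq_zero.mp h).resolve_left hτ
    have h3 : cross3 v (cross3 v m) = dot3 m v • v - dot3 v v • m := by
      ext <;> simp [dot3, cross3] <;> ring
    rw [h3, hmv, hvv, zero_smul, zero_sub, one_smul, dot3_neg_left] at h2
    exact hτ (by linarith)
  have hmx : dot3 r r • m = -w • cross3 v r := by
    have h1 := triple_id (cross3 v r) m
    rw [cross3_cross3 v r m, dot3_comm v m, hmv, dot3_comm r m, hmr, lagrange_id, hvv, hvr] at h1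
    simp only [zero_smul, sub_self, cross3_zero_left, add_zero] at h1
    have e : dot3 (cross3 v r) m = -w := by rw [hw]; simp [dot3, cross3]; ring
    rw [e] at h1
    rw [← h1]; congr 1; ring
  have hpos : 0 < dot3 r r := lt_of_le_of_ne (by simp only [dot3]; nlinarith [sq_nonneg r.1, sq_nonneg r.2.1, sq_nonneg r.2.2]) (Ne.symm hrr)
  set ρ := Real.sqrt (dot3 r r) with hρ
  have hρ0 : 0 < ρ := Real.sqrt_pos.mpr hpos
  have hρ2 : ρ ^ 2 = dot3 r r := Real.sq_sqrt hpos.le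
  refine ⟨ρ⁻¹ • r, ?_, ?_, fun u => ?_⟩
  · rw [dot3_smul_left, dot3_smul_right, ← hρ2]; field_simp
  · rw [dot3_smul_right, hvr, mul_zero]
  · have h1 : dot3 r r * dot3 m u = -w * dot3 (cross3 v r) u := by
      rw [← dot3_smul_left, hmx, dot3_smul_left]
    have h2 : dot3 (cross3 v (ρ⁻¹ • r)) u = ρ⁻¹ * dot3 (cross3 v r) u := by
      simp [dot3, cross3]; ring
    rw [hM, h2, smul_smul]
    congr 1
    rw [← hρ2] at h1
    field_simp
    linarith

def StructP (V : E3 → E3) : Prop := ∀ p, ∃ k : E3, dot3 k k = 1 ∧ dot3 (V p) k = 0 ∧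
      ∀ u, fderiv ℝ V p u = (-wedge V p * dot3 (cross3 (V p) k) u) • k

lemma ortho_decomp {v k b : E3} (hv : dot3 v v = 1) (hk : dot3 k k = 1) (hvk : dot3 v k = 0)
    (hb : dot3 (cross3 v k) b = 0) : b = dot3 v b • v + dot3 k b • k := by
  have h1 := triple_id (cross3 v k) b
  rw [lagrange_id, hv, hk, hvk, hb, cross3_cross3 v k b] at h1
  have h2 : ∀ s t : ℝ, cross3 (s • k - t • v) (cross3 v k) =
      (s * dot3 k k - t * dot3 v k) • v + (t * dot3 v v - s * dot3 v k) • k := by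
    intro s t
    ext <;> simp [dot3, cross3] <;> ring
  rw [h2, hv, hk, hvk] at h1
  simp only [mul_one, mul_zero, add_zero, sub_zero, zero_smul, zero_add] at h1
  have h3 : (1 - (0:ℝ)^2) = 1 := by norm_num
  rw [h3, one_smul] at h1
  exact h1

lemma dM_hasFDerivAt {V : E3 → E3} (hV : ContDiff ℝ (⊤ : ℕ∞) V) (x : E3) :
    HasFDerivAt (fderiv ℝ V) (fderiv ℝ (fderiv ℝ V) x) x := by
  have : ContDiff ℝ 1 (fderiv ℝ V) := hV.fderiv_right (by norm_cast)
  exact ((this.differentiable (by norm_num)) x).hasFDerivAt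

lemma MM_zero {V : E3 → E3} (hS : StructP V) (x u : E3) :
    fderiv ℝ V x (fderiv ℝ V x u) = 0 := by
  obtain ⟨k, hk, hvk, hM⟩ := hS x
  have h : dot3 (cross3 (V x) k) k = 0 := by simp only [dot3, cross3]; ring
  rw [hM u, map_smul, hM k, h]; simp

lemma T_symm {V : E3 → E3} (hV : ContDiff ℝ (⊤ : ℕ∞) V) (x u w : E3) :
    fderiv ℝ (fderiv ℝ V) x u w = fderiv ℝ (fderiv ℝ V) x w u := by
  have h := (hV.contDiffAt (x := x)).isSymmSndFDerivAt (by
    rw [minSmoothness_of_isRCLikeNormedField]; norm_cast)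
  exact h.eq u w

lemma T_V {V : E3 → E3} (hV : ContDiff ℝ (⊤ : ℕ∞) V) (hS : StructP V)
    (hMV : ∀ p, fderiv ℝ V p (V p) = 0) (x u : E3) :
    fderiv ℝ (fderiv ℝ V) x u (V x) = 0 := by
  have hd : Differentiable ℝ V := hV.differentiable (by norm_num)
  have h1 := (dM_hasFDerivAt hV x).clm_apply (hd x).hasFDerivAt
  have h2 : HasFDerivAt (fun y => fderiv ℝ V y (V y)) (0 : E3 →L[ℝ] E3) x := by
    simp only [hMV]; exact hasFDerivAt_const _ _
  have h3 := DFunLike.congr_fun (h1.unique h2) u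
  simp only [_root_.add_apply, ContinuousLinearMap.comp_apply,
    ContinuousLinearMap.flip_apply, _root_.zero_apply, MM_zero hS, zero_add] at h3
  exact h3

lemma T_M {V : E3 → E3} (hV : ContDiff ℝ (⊤ : ℕ∞) V) (hS : StructP V) (x u a : E3) :
    fderiv ℝ (fderiv ℝ V) x u (fderiv ℝ V x a) = - fderiv ℝ V x (fderiv ℝ (fderiv ℝ V) x u a) := by
  have h0 := dM_hasFDerivAt hV x
  have h1 := h0.clm_apply (h0.clm_apply (hasFDerivAt_const a x))
  have h2 : HasFDerivAt (fun y => fderiv ℝ V y (fderiv ℝ V y a)) (0 : E3 →L[ℝ] E3) x := by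
    simp only [MM_zero hS]; exact hasFDerivAt_const _ _
  have h3 := DFunLike.congr_fun (h1.unique h2) u
  simp at h3
  rw [eq_neg_iff_add_eq_zero, add_comm]
  exact h3

lemma T_ker {V : E3 → E3} (hV : ContDiff ℝ (⊤ : ℕ∞) V) (hu : ∀ p, dot3 (V p) (V p) = 1)
    (hS : StructP V)
    (hMV : ∀ p, fderiv ℝ V p (V p) = 0) (hc : ∀ p, wedge V p ≠ 0) (x b : E3)
    (hb : fderiv ℝ V x b = 0) :
    fderiv ℝ (fderiv ℝ V) x b b = 0 := by
  obtain ⟨k, hk, hvk, hM⟩ := hS x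
  have hk0 : k ≠ 0 := by rintro rfl; simp [dot3] at hk
  set T := fderiv ℝ (fderiv ℝ V) x with hT
  set n := cross3 (V x) k with hn
  have hnn : dot3 n n = 1 := by rw [hn, lagrange_id, hu, hk, hvk]; norm_num
  have hnb : dot3 n b = 0 := by
    rw [hM b] at hb
    have := (smul_eq_zero.mp hb).resolve_right hk0
    exact (mul_eq_zero.mp this).resolve_left (neg_ne_zero.mpr (hc x))
  have hMn : fderiv ℝ V x n = (-wedge V x) • k := by rw [hM n, hnn, mul_one]
  have hkM : k = (-wedge V x)⁻¹ • fderiv ℝ V x n := by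
    rw [hMn, smul_smul, inv_mul_cancel₀ (neg_ne_zero.mpr (hc x)), one_smul]
  have hMTk : ∀ u, fderiv ℝ V x (T u k) = 0 := by
    intro u
    rw [hkM, map_smul, T_M hV hS, smul_neg, map_neg, map_smul, MM_zero hS]; simp
  have hkk : T k k = 0 := by
    have h1 : T k k = (-wedge V x)⁻¹ • T k (fderiv ℝ V x n) := by
      rw [← map_smul, ← hkM]
    rw [h1, T_M hV hS, ← hT, hT, T_symm hV x k n, ← hT, hMTk]; simp
  have hvk' : T (V x) k = 0 := by rw [hT, T_symm hV, T_V hV hS hMV]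
  have hdec := ortho_decomp (hu x) hk hvk hnb
  have h2 : T b b = dot3 (V x) b • T b (V x) + dot3 k b • T b k := by
    conv_lhs => rw [show T b b = T b (dot3 (V x) b • V x + dot3 k b • k) by rw [← hdec]]
    rw [map_add, map_smul, map_smul]
  have h3 : T b k = 0 := by
    rw [hdec, map_add, map_smul, map_smul, _root_.add_apply,
      _root_.smul_apply, _root_.smul_apply, hkk, hvk']; simp
  rw [h2, h3, hT, T_V hV hS hMV]; simp

lemma norm_cross3_le (a b : E3) : ‖cross3 a b‖ ≤ 2 * ‖a‖ * ‖b‖ := by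
  have ha1 := norm_fst_le a
  have ha2 := (norm_fst_le a.2).trans (norm_snd_le a)
  have ha3 := (norm_snd_le a.2).trans (norm_snd_le a)
  have hb1 := norm_fst_le b
  have hb2 := (norm_fst_le b.2).trans (norm_snd_le b)
  have hb3 := (norm_snd_le b.2).trans (norm_snd_le b)
  have key : ∀ x y z w : ℝ, ‖x‖ ≤ ‖a‖ → ‖y‖ ≤ ‖b‖ → ‖z‖ ≤ ‖a‖ → ‖w‖ ≤ ‖b‖ →
      ‖x * y - z * w‖ ≤ 2 * ‖a‖ * ‖b‖ := by
    intro x y z w hx hy hz hw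
    calc ‖x * y - z * w‖ ≤ ‖x * y‖ + ‖z * w‖ := norm_sub_le _ _
      _ ≤ ‖a‖ * ‖b‖ + ‖a‖ * ‖b‖ := by
        rw [norm_mul, norm_mul]; gcongr
      _ = _ := by ring
  refine norm_prod_le_iff.mpr ⟨?_, norm_prod_le_iff.mpr ⟨?_, ?_⟩⟩ <;>
    simp only [cross3] <;> apply key <;> assumption

lemma norm_le_one_of_unit {a : E3} (h : dot3 a a = 1) : ‖a‖ ≤ 1 := by
  simp only [dot3] at h
  refine norm_prod_le_iff.mpr ⟨?_, norm_prod_le_iff.mpr ⟨?_, ?_⟩⟩ <;>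
  · rw [Real.norm_eq_abs]
    apply abs_le_one_iff_mul_self_le_one.mpr
    nlinarith [sq_nonneg a.1, sq_nonneg a.2.1, sq_nonneg a.2.2]

lemma T_bound {V : E3 → E3} (hV : ContDiff ℝ (⊤ : ℕ∞) V) (hu : ∀ p, dot3 (V p) (V p) = 1)
    (hS : StructP V)
    (hMV : ∀ p, fderiv ℝ V p (V p) = 0) (hc : ∀ p, wedge V p ≠ 0) (x u : E3) :
    ‖fderiv ℝ (fderiv ℝ V) x u u‖ ≤
      (‖fderiv ℝ (fderiv ℝ V) x‖ * (2 * |wedge V x|⁻¹) *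
        (2 * ‖u‖ + 2 * |wedge V x|⁻¹ * (‖fderiv ℝ V x‖ * ‖u‖))) * ‖fderiv ℝ V x u‖ := by
  obtain ⟨k, hk, hvk, hM⟩ := hS x
  set T := fderiv ℝ (fderiv ℝ V) x with hT
  set n := cross3 (V x) k with hn
  set c := wedge V x with hcd
  have hc0 : c ≠ 0 := hc x
  have hnn : dot3 n n = 1 := by rw [hn, lagrange_id, hu, hk, hvk]; norm_num
  set y := dot3 n u • n with hy
  have hyN : y = (-c)⁻¹ • cross3 (V x) (fderiv ℝ V x u) := by
    have : ∀ t : ℝ, cross3 (V x) (t • k) = t • n := by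
      intro t; rw [hn]; ext <;> simp [cross3] <;> ring
    rw [hM u, this, smul_smul, hy]; congr 1; field_simp
  have hb : fderiv ℝ V x (u - y) = 0 := by
    rw [map_sub, hy, map_smul, hM u, hM n, hnn, smul_smul, ← sub_smul]
    have : -c * dot3 n u - dot3 n u * (-c * 1) = 0 := by ring
    rw [this, zero_smul]
  have hTb := T_ker hV hu hS hMV hc x _ hb
  rw [← hT] at hTb
  have hyb : ‖y‖ ≤ 2 * |c|⁻¹ * ‖fderiv ℝ V x u‖ := by
    rw [hyN, norm_smul, norm_inv, norm_neg, Real.norm_eq_abs]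
    have h1 := norm_cross3_le (V x) (fderiv ℝ V x u)
    have h2 := norm_le_one_of_unit (hu x)
    calc |c|⁻¹ * ‖cross3 (V x) (fderiv ℝ V x u)‖ ≤ |c|⁻¹ * (2 * 1 * ‖fderiv ℝ V x u‖) := by
          gcongr; exact h1.trans (by gcongr)
      _ = _ := by ring
  have hN : ‖fderiv ℝ V x u‖ ≤ ‖fderiv ℝ V x‖ * ‖u‖ := ContinuousLinearMap.le_opNorm _ _
  have e : T u u = T y (u - y) + T u y := by
    have : T u u - T (u - y) (u - y) = T y (u - y) + T u y := by
      simp only [map_sub, _root_.sub_apply]; abel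
    rw [← this, hTb, sub_zero]
  have b1 : ‖T y (u - y)‖ ≤ ‖T‖ * ‖y‖ * (‖u‖ + ‖y‖) :=
    (T.le_opNorm₂ y (u - y)).trans (by gcongr; exact norm_sub_le _ _)
  have b2 : ‖T u y‖ ≤ ‖T‖ * ‖u‖ * ‖y‖ := T.le_opNorm₂ u y
  calc ‖T u u‖ ≤ ‖T y (u - y)‖ + ‖T u y‖ := by rw [e]; exact norm_add_le _ _
    _ ≤ ‖T‖ * ‖y‖ * (‖u‖ + ‖y‖) + ‖T‖ * ‖u‖ * ‖y‖ := add_le_add b1 b2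
    _ = ‖T‖ * ‖y‖ * (2 * ‖u‖ + ‖y‖) := by ring
    _ ≤ ‖T‖ * (2 * |c|⁻¹ * ‖fderiv ℝ V x u‖) *
        (2 * ‖u‖ + 2 * |c|⁻¹ * (‖fderiv ℝ V x‖ * ‖u‖)) := by
      gcongr; exact hyb.trans (by gcongr)
    _ = _ := by ring

lemma continuous_wedge {V : E3 → E3} (hV : ContDiff ℝ (⊤ : ℕ∞) V) : Continuous (wedge V) := by
  have h1 : Continuous (fderiv ℝ V) := hV.continuous_fderiv (by norm_num)
  have h2 := hV.continuous
  unfold wedge dAlpha dot3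
  fun_prop

lemma cont_norm_fderiv {E F : Type*} [NormedAddCommGroup E] [NormedSpace ℝ E]
    [NormedAddCommGroup F] [NormedSpace ℝ F] {f : E → F} (h : ContDiff ℝ 1 f) :
    Continuous (fun x => ‖fderiv ℝ f x‖) :=
  continuous_norm.comp (h.continuous_fderiv (by norm_num))

lemma const_on_ker {V : E3 → E3} (hV : ContDiff ℝ (⊤ : ℕ∞) V) (hu : ∀ p, dot3 (V p) (V p) = 1)
    (hS : StructP V)
    (hMV : ∀ p, fderiv ℝ V p (V p) = 0) (hc : ∀ p, wedge V p ≠ 0) (p u : E3)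
    (h0 : fderiv ℝ V p u = 0) : V (p + u) = V p := by
  have hd : Differentiable ℝ V := hV.differentiable (by norm_num)
  have hl : ∀ s : ℝ, HasDerivAt (fun t : ℝ => p + t • u) u s := by
    intro s
    simpa using ((hasDerivAt_id s).smul_const u).const_add p
  have hlc : Continuous (fun t : ℝ => p + t • u) := by fun_prop
  have hMc : Continuous (fderiv ℝ V) := hV.continuous_fderiv (by norm_num)
  have hM1 : ContDiff ℝ 1 (fderiv ℝ V) := hV.fderiv_right (by norm_cast)
  have hTn : Continuous (fun x => ‖fderiv ℝ (fderiv ℝ V) x‖) := cont_norm_fderiv hM1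
  have hMn : Continuous (fun x => ‖fderiv ℝ V x‖) := cont_norm_fderiv (hV.of_le (by norm_cast))
  have hwc := continuous_wedge hV
  set κ : E3 → ℝ := fun x => (‖fderiv ℝ (fderiv ℝ V) x‖ * (2 * |wedge V x|⁻¹) *
        (2 * ‖u‖ + 2 * |wedge V x|⁻¹ * (‖fderiv ℝ V x‖ * ‖u‖))) with hκ
  have hwi : Continuous (fun x => |wedge V x|⁻¹) := hwc.abs.inv₀ fun x => by simpa using hc x
  have hκc : Continuous κ := by
    exact (hTn.mul (continuous_const.mul hwi)).mul
      (continuous_const.add ((continuous_const.mul hwi).mul (hMn.mul continuous_const)))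
  obtain ⟨K, hK⟩ := (isCompact_Icc (a := (0:ℝ)) (b := 1)).bddAbove_image
    (hκc.comp hlc).continuousOn
  have hK' : ∀ s ∈ Set.Icc (0:ℝ) 1, κ (p + s • u) ≤ K := fun s hs => hK ⟨s, hs, rfl⟩
  have hf' : ∀ s : ℝ, HasDerivAt (fun s : ℝ => fderiv ℝ V (p + s • u) u)
      (fderiv ℝ (fderiv ℝ V) (p + s • u) u u) s := by
    intro s
    have h1 := (dM_hasFDerivAt hV (p + s • u)).comp_hasDerivAt s (hl s)
    have h2 := h1.clm_apply (hasDerivAt_const s u)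
    simpa using h2
  have hz := eq_zero_of_abs_deriv_le_mul_abs_self_of_eq_zero_right (K := K) (a := 0) (b := 1)
    (f := fun s : ℝ => fderiv ℝ V (p + s • u) u)
    (f' := fun s => fderiv ℝ (fderiv ℝ V) (p + s • u) u u)
    (fun s _ => (hf' s).continuousAt.continuousWithinAt)
    (fun s _ => (hf' s).hasDerivWithinAt) (by simpa using h0)
    (fun s hs => (T_bound hV hu hS hMV hc (p + s • u) u).trans
      (mul_le_mul_of_nonneg_right (hK' s ⟨hs.1, hs.2.le⟩) (norm_nonneg _)))
  have hg : ∀ s : ℝ, HasDerivAt (fun s : ℝ => V (p + s • u)) (fderiv ℝ V (p + s • u) u) s :=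
    fun s => (hd (p + s • u)).hasFDerivAt.comp_hasDerivAt s (hl s)
  have hcst := constant_of_has_deriv_right_zero (a := 0) (b := 1) (f := fun s : ℝ => V (p + s • u))
    (fun s _ => (hg s).continuousAt.continuousWithinAt)
    (fun s hs => by
      have h1 := (hg s).hasDerivWithinAt (s := Set.Ici s)
      have h2 : fderiv ℝ V (p + s • u) u = 0 := hz s ⟨hs.1, hs.2.le⟩
      rwa [h2] at h1)
  simpa using hcst 1 ⟨by norm_num, le_rfl⟩

lemma par_of_perp {a b : E3} (ha : dot3 a a = 1) (hb : dot3 b b = 1)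
    (h : ∀ u, dot3 a u = 0 → dot3 b u = 0) : b = a ∨ b = -a := by
  apply par_of_cross ha hb
  apply dot3_self_eq_zero
  have h1 := h (b + (-(dot3 a b)) • a) (by
    rw [dot3_add_right, dot3_smul_right, ha]; ring)
  rw [dot3_add_right, dot3_smul_right, hb, dot3_comm b a] at h1
  rw [lagrange_id, ha, hb]; linarith

lemma const_dir {V : E3 → E3} (hd : Differentiable ℝ V) (c u : E3)
    (h : ∀ s : ℝ, V (c + s • u) = V c) : fderiv ℝ V c u = 0 := by
  have hl : HasDerivAt (fun t : ℝ => c + t • u) u 0 := by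
    simpa using ((hasDerivAt_id (0:ℝ)).smul_const u).const_add c
  have h1 : HasDerivAt (fun t : ℝ => V (c + t • u)) (fderiv ℝ V c u) 0 := by
    have := (hd (c + (0:ℝ) • u)).hasFDerivAt.comp_hasDerivAt (0:ℝ) hl
    rw [zero_smul, add_zero] at this
    exact this
  simp only [h] at h1
  exact h1.unique (hasDerivAt_const (0:ℝ) (V c))

lemma normal_const {V : E3 → E3} (hV : ContDiff ℝ (⊤ : ℕ∞) V) (hu : ∀ p, dot3 (V p) (V p) = 1)
    (hS : StructP V)
    (hMV : ∀ p, fderiv ℝ V p (V p) = 0) (hc : ∀ p, wedge V p ≠ 0) :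
    ∃ N : E3, dot3 N N = 1 ∧ ∀ p, dot3 N (V p) = 0 ∧ fderiv ℝ V p N ≠ 0 ∧
      ∀ u, dot3 N u = 0 → fderiv ℝ V p u = 0 := by
  have hd : Differentiable ℝ V := hV.differentiable (by norm_num)
  have hn : ∀ p, ∃ n : E3, dot3 n n = 1 ∧ dot3 n (V p) = 0 ∧ fderiv ℝ V p n ≠ 0 ∧
      (∀ u, fderiv ℝ V p u = 0 ↔ dot3 n u = 0) := by
    intro p
    obtain ⟨k, hk, hvk, hM⟩ := hS p
    have hk0 : k ≠ 0 := by rintro rfl; simp [dot3] at hk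
    have hw := neg_ne_zero.mpr (hc p)
    have hnn : dot3 (cross3 (V p) k) (cross3 (V p) k) = 1 := by
      rw [lagrange_id, hu, hk, hvk]; norm_num
    refine ⟨cross3 (V p) k, hnn, ?_, ?_, ?_⟩
    · simp only [dot3, cross3]; ring
    · rw [hM, hnn, mul_one]; exact smul_ne_zero hw hk0
    · intro u
      rw [hM, smul_eq_zero, mul_eq_zero]
      simp [hw, hk0, hc p]
  choose n hnn hnV hnM hker using hn
  have hplane : ∀ p c u, dot3 (n p) (c - p) = 0 → dot3 (n p) u = 0 → fderiv ℝ V c u = 0 := by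
    intro p c u h1 h2
    have key : ∀ s : ℝ, V (c + s • u) = V p := by
      intro s
      have e : c + s • u = p + ((c - p) + s • u) := by abel
      rw [e]
      apply const_on_ker hV hu hS hMV hc
      rw [hker, dot3_add_right, dot3_smul_right, h1, h2]; ring
    apply const_dir hd
    intro s
    have := key 0
    rw [zero_smul, add_zero] at this
    rw [key s, this]
  have hpar : ∀ q, n q = n 0 ∨ n q = - n 0 := by
    intro q
    by_cases hx : cross3 (n 0) (n q) = 0
    · exact par_of_cross (hnn 0) (hnn q) hx
    exfalso
    apply hx
    set x := cross3 (n 0) (n q) with hxd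
    have hxx : dot3 x x ≠ 0 := fun h => hx (dot3_self_eq_zero h)
    set y := cross3 (n 0) x with hy
    have hy0 : dot3 (n 0) y = 0 := by rw [hy]; simp only [dot3, cross3]; ring
    have hyq : dot3 (n q) y = - dot3 x x := by
      rw [hy, hxd]; simp only [dot3, cross3]; ring
    set t := - dot3 (n q) q / dot3 x x with ht
    set c := t • y with hcd
    have hc0 : dot3 (n 0) (c - 0) = 0 := by rw [sub_zero, hcd, dot3_smul_right, hy0, mul_zero]
    have hcq : dot3 (n q) (c - q) = 0 := by
      have : dot3 (n q) (c - q) = dot3 (n q) c - dot3 (n q) q := by simp [dot3]; ring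
      rw [this, hcd, dot3_smul_right, hyq, ht]; field_simp; ring
    have p1 := par_of_perp (hnn 0) (hnn c) (fun u h => (hker c u).mp (hplane 0 c u hc0 h))
    have p2 := par_of_perp (hnn q) (hnn c) (fun u h => (hker c u).mp (hplane q c u hcq h))
    have p3 : n q = n 0 ∨ n q = - n 0 := by
      rcases p1 with h1 | h1 <;> rcases p2 with h2 | h2
      · left; rw [← h2, h1]
      · right; rw [← h1, h2, neg_neg]
      · right; rw [← h2, h1]
      · left; rw [h1] at h2; exact (neg_injective h2).symm
    rw [hxd]
    rcases p3 with h | h <;> rw [h] <;> ext <;> simp [cross3] <;> ring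
  refine ⟨n 0, hnn 0, fun p => ?_⟩
  have a1 := hnV p
  have a2 := hnM p
  have a3 := hker p
  rcases hpar p with h | h
  · rw [h] at a1 a2 a3
    exact ⟨a1, a2, fun u hu => (a3 u).mpr hu⟩
  · rw [h] at a1 a2 a3
    rw [dot3_neg_left] at a1
    rw [map_neg] at a2
    refine ⟨by linarith, fun h0 => a2 (by rw [h0, neg_zero]), fun u hu => (a3 u).mpr ?_⟩
    rw [dot3_neg_left, hu, neg_zero]

lemma angle_lift {c s : ℝ → ℝ} (hc : ContDiff ℝ (⊤ : ℕ∞) c) (hs : ContDiff ℝ (⊤ : ℕ∞) s)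
    (hcs : ∀ z, c z ^ 2 + s z ^ 2 = 1) (hc0 : c 0 = 1) (hs0 : s 0 = 0) :
    ∃ θ : ℝ → ℝ, ContDiff ℝ (⊤ : ℕ∞) θ ∧ θ 0 = 0 ∧ (∀ z, c z = cos (θ z)) ∧
      ∀ z, s z = -sin (θ z) := by
  have hdc : ∀ z, HasDerivAt c (deriv c z) z := fun z =>
    ((hc.differentiable (by norm_num)) z).hasDerivAt
  have hds : ∀ z, HasDerivAt s (deriv s z) z := fun z =>
    ((hs.differentiable (by norm_num)) z).hasDerivAt
  have hc' : ContDiff ℝ (⊤ : ℕ∞) (deriv c) := (contDiff_infty_iff_deriv.mp hc).2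
  have hs' : ContDiff ℝ (⊤ : ℕ∞) (deriv s) := (contDiff_infty_iff_deriv.mp hs).2
  set g : ℝ → ℝ := fun z => s z * deriv c z - c z * deriv s z with hg
  have hgs : ContDiff ℝ (⊤ : ℕ∞) g := (hs.mul hc').sub (hc.mul hs')
  set θ : ℝ → ℝ := fun z => ∫ t in (0:ℝ)..z, g t with hθ
  have hdθ : ∀ z, HasDerivAt θ (g z) z := fun z =>
    (hgs.continuous.integral_hasStrictDerivAt 0 z).hasDerivAt
  have hθ0 : θ 0 = 0 := by simp [hθ]
  have hrel : ∀ z, c z * deriv c z + s z * deriv s z = 0 := by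
    intro z
    have h1 := ((hdc z).pow 2).add ((hds z).pow 2)
    have h2 : HasDerivAt (c ^ 2 + s ^ 2) 0 z := by
      have : c ^ 2 + s ^ 2 = fun _ => (1:ℝ) := by ext z; exact hcs z
      rw [this]; exact hasDerivAt_const _ _
    have h3 := h1.unique h2
    simp at h3
    linarith
  have r1 : ∀ z, deriv c z = s z * g z := by
    intro z; simp only [hg]; linear_combination (-deriv c z) * hcs z + c z * hrel z
  have r2 : ∀ z, deriv s z = - c z * g z := by
    intro z; simp only [hg]; linear_combination (-deriv s z) * hcs z + s z * hrel z
  have ha : ∀ z, HasDerivAt (fun z => c z * cos (θ z) - s z * sin (θ z)) 0 z := by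
    intro z
    have := ((hdc z).mul (hdθ z).cos).sub ((hds z).mul (hdθ z).sin)
    refine this.congr_deriv ?_
    rw [r1, r2]; ring
  have hb : ∀ z, HasDerivAt (fun z => c z * sin (θ z) + s z * cos (θ z)) 0 z := by
    intro z
    have := ((hdc z).mul (hdθ z).sin).add ((hds z).mul (hdθ z).cos)
    refine this.congr_deriv ?_
    rw [r1, r2]; ring
  have a1 : ∀ z, c z * cos (θ z) - s z * sin (θ z) = 1 := by
    intro z
    have := is_const_of_deriv_eq_zero (fun z => (ha z).differentiableAt) (fun z => (ha z).deriv) z 0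
    simpa [hθ0, hc0, hs0] using this
  have b1 : ∀ z, c z * sin (θ z) + s z * cos (θ z) = 0 := by
    intro z
    have := is_const_of_deriv_eq_zero (fun z => (hb z).differentiableAt) (fun z => (hb z).deriv) z 0
    simpa [hθ0, hc0, hs0] using this
  refine ⟨θ, ?_, hθ0, ?_, ?_⟩
  · rw [contDiff_infty_iff_deriv]
    refine ⟨fun z => (hdθ z).differentiableAt, ?_⟩
    have : deriv θ = g := by ext z; exact (hdθ z).deriv
    rw [this]; exact hgs
  · intro z
    linear_combination cos (θ z) * a1 z + sin (θ z) * b1 z - c z * sin_sq_add_cos_sq (θ z)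
  · intro z
    linear_combination -sin (θ z) * a1 z + cos (θ z) * b1 z - s z * sin_sq_add_cos_sq (θ z)

def frameEquiv (f1 f2 f3 : E3) (h11 : dot3 f1 f1 = 1) (h22 : dot3 f2 f2 = 1)
    (h33 : dot3 f3 f3 = 1) (h12 : dot3 f1 f2 = 0) (h13 : dot3 f1 f3 = 0) (h23 : dot3 f2 f3 = 0)
    (hdec : ∀ q, q = dot3 f1 q • f1 + dot3 f2 q • f2 + dot3 f3 q • f3) : E3 ≃ₗ[ℝ] E3 where
  toFun p := p.1 • f1 + p.2.1 • f2 + p.2.2 • f3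
  map_add' a b := by simp only [Prod.fst_add, Prod.snd_add, add_smul]; abel
  map_smul' t a := by simp only [Prod.smul_fst, Prod.smul_snd, smul_eq_mul, mul_smul, smul_add,
    RingHom.id_apply]
  invFun q := (dot3 f1 q, dot3 f2 q, dot3 f3 q)
  left_inv p := by
    simp only [dot3_add_right, dot3_smul_right, h11, h22, h33, h12, h13, h23, dot3_comm f2 f1,
      dot3_comm f3 f1, dot3_comm f3 f2]
    ext <;> simp
  right_inv q := (hdec q).symm

lemma rotation_form {V : E3 → E3} (hV : ContDiff ℝ (⊤ : ℕ∞) V)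
    (hu : ∀ p, dot3 (V p) (V p) = 1) (hS : StructP V)
    (hMV : ∀ p, fderiv ℝ V p (V p) = 0) (hc : ∀ p, wedge V p ≠ 0) :
    ∃ (A : E3 ≃ₗ[ℝ] E3) (θ : ℝ → ℝ), ContDiff ℝ (⊤ : ℕ∞) θ ∧ θ 0 = 0 ∧
      (∀ z : ℝ, deriv θ z ≠ 0) ∧
      (∀ u v : E3, dot3 (A u) (A v) = dot3 u v) ∧
      ∀ p : E3, V (A p) = A (cos (θ p.2.2), -sin (θ p.2.2), (0 : ℝ)) := by
  obtain ⟨N, hNN, hN⟩ := normal_const hV hu hS hMV hc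
  set f1 := V 0 with hf1
  set f2 := cross3 N f1 with hf2
  have h11 : dot3 f1 f1 = 1 := hu 0
  have hN1 : dot3 N f1 = 0 := (hN 0).1
  have h13 : dot3 f1 N = 0 := by rw [dot3_comm]; exact hN1
  have h22 : dot3 f2 f2 = 1 := by rw [hf2, lagrange_id, hNN, h11, hN1]; norm_num
  have h12 : dot3 f1 f2 = 0 := by rw [hf2]; simp only [dot3, cross3]; ring
  have h23 : dot3 f2 N = 0 := by rw [hf2]; simp only [dot3, cross3]; ring
  have hdec : ∀ q, q = dot3 f1 q • f1 + dot3 f2 q • f2 + dot3 N q • N := by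
    intro q
    have h := ortho_decomp (v := N) (k := f1) (b := q - dot3 f2 q • f2) hNN h11 hN1 (by
      rw [← hf2]
      have : dot3 f2 (q - dot3 f2 q • f2) = dot3 f2 q - dot3 f2 q * dot3 f2 f2 := by
        simp [dot3]; ring
      rw [this, h22]; ring)
    have e : ∀ w : E3, dot3 w f2 = 0 → dot3 w (q - dot3 f2 q • f2) = dot3 w q := by
      intro w hw
      have : dot3 w (q - dot3 f2 q • f2) = dot3 w q - dot3 f2 q * dot3 w f2 := by
        simp [dot3]; ring
      rw [this, hw]; ring
    rw [e N (by rw [dot3_comm]; exact h23), e f1 h12, sub_eq_iff_eq_add] at h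
    conv_lhs => rw [h]
    abel
  set A := frameEquiv f1 f2 N h11 h22 hNN h12 h13 h23 hdec with hA
  have hAp : ∀ p, A p = p.1 • f1 + p.2.1 • f2 + p.2.2 • N := fun p => rfl
  set W : ℝ → E3 := fun z => V (z • N) with hW
  have hWs : ContDiff ℝ (⊤ : ℕ∞) W := hV.comp (by fun_prop)
  set c : ℝ → ℝ := fun z => dot3 f1 (W z) with hcd
  set s : ℝ → ℝ := fun z => dot3 f2 (W z) with hsd
  have hcs : ContDiff ℝ (⊤ : ℕ∞) c := contDiff_dot3 contDiff_const hWs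
  have hss : ContDiff ℝ (⊤ : ℕ∞) s := contDiff_dot3 contDiff_const hWs
  have hWd : ∀ z, W z = c z • f1 + s z • f2 := by
    intro z
    have := hdec (W z)
    rw [show dot3 N (W z) = 0 from (hN _).1, zero_smul, add_zero] at this
    exact this
  have hW0 : W 0 = f1 := by simp [hW, hf1]
  obtain ⟨θ, hθs, hθ0, hθc, hθsn⟩ := angle_lift hcs hss (by
    intro z
    have h1 : dot3 (W z) (W z) = 1 := hu _
    rw [hWd z] at h1
    simp only [dot3_add_right, dot3_add_left, dot3_smul_right, dot3_smul_left, h11, h22, h12,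
      dot3_comm f2 f1] at h1
    linarith) (by rw [hcd]; simp only [hW0, h11]) (by
      rw [hsd]; simp only [hW0]; rw [dot3_comm, h12])
  refine ⟨A, θ, hθs, hθ0, ?_, ?_, ?_⟩
  · intro z hz
    have hdθ : HasDerivAt θ 0 z := by
      rw [← hz]; exact ((hθs.differentiable (by norm_num)) z).hasDerivAt
    have hWe : W = fun z => cos (θ z) • f1 + (-sin (θ z)) • f2 := by
      ext1 z; rw [hWd z, hθc, hθsn]
    have h1 : HasDerivAt W 0 z := by
      rw [hWe]
      have := (hdθ.cos.smul_const f1).add (hdθ.sin.neg.smul_const f2)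
      refine this.congr_deriv ?_
      simp
    have h2 : HasDerivAt W (fderiv ℝ V (z • N) N) z := by
      have hl : HasDerivAt (fun t : ℝ => t • N) N z := by
        simpa using (hasDerivAt_id z).smul_const N
      exact ((hV.differentiable (by norm_num)) (z • N)).hasFDerivAt.comp_hasDerivAt z hl
    exact (hN (z • N)).2.1 (h2.unique h1)
  · intro u v
    rw [hAp, hAp]
    simp only [dot3_add_right, dot3_add_left, dot3_smul_right, dot3_smul_left, h11, h22, h12,
      dot3_comm f2 f1, h13, h23, hNN, dot3_comm N f1, dot3_comm N f2]
    simp only [dot3]; ring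
  · intro p
    rw [hAp, hAp]
    have e : p.1 • f1 + p.2.1 • f2 + p.2.2 • N = p.2.2 • N + (p.1 • f1 + p.2.1 • f2) := by abel
    rw [e, const_on_ker hV hu hS hMV hc]
    · have := hWd p.2.2
      rw [hθc, hθsn] at this
      simp only [hW] at this
      rw [this]; simp
    · apply (hN _).2.2
      rw [dot3_add_right, dot3_smul_right, dot3_smul_right, hN1, dot3_comm N f2, h23]; ring

def psiEquiv (θ g : ℝ → ℝ) (hg : ∀ z, g z ≠ 0) : E3 ≃ E3 where
  toFun p := (p.2.2 * cos (θ p.2.1) + p.1 * (g p.2.1)⁻¹ * sin (θ p.2.1),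
    -p.2.2 * sin (θ p.2.1) + p.1 * (g p.2.1)⁻¹ * cos (θ p.2.1), p.2.1)
  invFun q := ((q.1 * sin (θ q.2.2) + q.2.1 * cos (θ q.2.2)) * g q.2.2, q.2.2,
    q.1 * cos (θ q.2.2) - q.2.1 * sin (θ q.2.2))
  left_inv p := by
    have := hg p.2.1
    have h := sin_sq_add_cos_sq (θ p.2.1)
    ext <;> simp only
    · field_simp; linear_combination p.1 * h
    · linear_combination p.2.2 * h
  right_inv q := by
    have := hg q.2.2
    have h := sin_sq_add_cos_sq (θ q.2.2)
    ext <;> simp only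
    · field_simp; linear_combination q.1 * h
    · field_simp; linear_combination q.2.1 * h

lemma psi_deriv {θ g : ℝ → ℝ} (hg : ∀ z, g z ≠ 0) (hθ : ∀ z, HasDerivAt θ (g z) z)
    (hgs : Differentiable ℝ g) (hd : Differentiable ℝ (psiEquiv θ g hg)) (p u : E3) :
    dot3 (cos (θ p.2.1), -sin (θ p.2.1), 0) (fderiv ℝ (psiEquiv θ g hg) p u) =
      u.2.2 + p.1 * u.2.1 := by
  obtain ⟨x, y, z⟩ := p
  obtain ⟨a, b, c⟩ := u
  have hl : HasDerivAt (fun t : ℝ => ((x, y, z) : E3) + t • ((a, b, c) : E3)) (a, b, c) 0 := by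
    simpa using ((hasDerivAt_id (0:ℝ)).smul_const ((a, b, c) : E3)).const_add (x, y, z)
  have h1 : HasDerivAt (fun t : ℝ => psiEquiv θ g hg (((x, y, z) : E3) + t • ((a, b, c) : E3)))
      (fderiv ℝ (psiEquiv θ g hg) (x, y, z) (a, b, c)) 0 := by
    have := (hd (((x, y, z) : E3) + (0:ℝ) • ((a, b, c) : E3))).hasFDerivAt.comp_hasDerivAt (0:ℝ) hl
    rw [zero_smul, add_zero] at this
    exact this
  have hx : HasDerivAt (fun t : ℝ => x + t * a) a 0 := by
    simpa using ((hasDerivAt_id (0:ℝ)).mul_const a).const_add x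
  have hy : HasDerivAt (fun t : ℝ => y + t * b) b 0 := by
    simpa using ((hasDerivAt_id (0:ℝ)).mul_const b).const_add y
  have hz : HasDerivAt (fun t : ℝ => z + t * c) c 0 := by
    simpa using ((hasDerivAt_id (0:ℝ)).mul_const c).const_add z
  have ey : y + 0 * b = y := by ring
  have hT : HasDerivAt (fun t : ℝ => θ (y + t * b)) (g y * b) 0 := by
    have := (hθ (y + 0 * b)).comp (0:ℝ) hy
    rw [ey] at this; exact this
  have hG : HasDerivAt (fun t : ℝ => (g (y + t * b))⁻¹) (deriv (fun z => (g z)⁻¹) y * b) 0 := by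
    have h0 : HasDerivAt (fun z => (g z)⁻¹) (deriv (fun z => (g z)⁻¹) (y + 0 * b)) (y + 0 * b) :=
      ((hgs _).inv (hg _)).hasDerivAt
    have := h0.comp (0:ℝ) hy
    rw [ey] at this; exact this
  have c1 := (hz.mul hT.cos).add ((hx.mul hG).mul hT.sin)
  have c2 := (hz.neg.mul hT.sin).add ((hx.mul hG).mul hT.cos)
  have h2 := c1.prodMk (c2.prodMk hy)
  have h3 := h1.unique h2
  rw [h3]
  have hgy := hg y
  have h := sin_sq_add_cos_sq (θ y)
  simp only [dot3, zero_mul, add_zero]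
  have hgg : g y * (g y)⁻¹ = 1 := mul_inv_cancel₀ hgy
  simp
  linear_combination (c + x * b * (g y * (g y)⁻¹)) * h + x * b * hgg
/-- If a line fibration induces a contact structure and every line has a distinct
parallel line in the fibration, then after an affine (rigid) change of coordinates
`V(x,y,z) = (cos θ(z), -sin θ(z), 0)` with `θ(0) = 0` and `θ'` nowhere zero;
consequently `ker α` is diffeomorphic to the standard contact structure
`ker (dz + x dy)`. -/
theorem stmt_19 (V : E3 → E3) (hV : ContDiff ℝ (⊤ : ℕ∞) V) (hfib : IsLineFibration V)
    (hcontact : ∀ p : E3, wedge V p ≠ 0)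
    (hpar : ∀ p : E3, ∃ q : E3, line V q ≠ line V p ∧ (V q = V p ∨ V q = -V p)) :
    (∃ (A : E3 ≃ᵃ[ℝ] E3) (θ : ℝ → ℝ), ContDiff ℝ (⊤ : ℕ∞) θ ∧ θ 0 = 0 ∧
      (∀ z : ℝ, deriv θ z ≠ 0) ∧
      (∀ u v : E3, dot3 (A.linear u) (A.linear v) = dot3 u v) ∧
      ∀ p : E3, V (A p) = A.linear (cos (θ p.2.2), -sin (θ p.2.2), (0 : ℝ))) ∧
    ∃ Φ : E3 ≃ₜ E3, ContDiff ℝ (⊤ : ℕ∞) (Φ : E3 → E3) ∧ ContDiff ℝ (⊤ : ℕ∞) (Φ.symm : E3 → E3) ∧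
      ∃ f : E3 → ℝ, (∀ p, f p ≠ 0) ∧
        ∀ p u : E3,
          dot3 (V (Φ p)) (fderiv ℝ (Φ : E3 → E3) p u) = f p * (u.2.2 + p.1 * u.2.1) := by
  obtain ⟨hu, _⟩ := id hfib
  have hd : Differentiable ℝ V := hV.differentiable (by norm_num)
  have hS : StructP V := structure_thm hd hfib hcontact hpar
  obtain ⟨A, θ, hθs, hθ0, hθ', hA, hVA⟩ :=
    rotation_form hV hu hS (dV_self hd hfib) hcontact
  refine ⟨⟨A.toAffineEquiv, θ, hθs, hθ0, hθ', hA, hVA⟩, ?_⟩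
  have hdθ : ∀ z, HasDerivAt θ (deriv θ z) z := fun z =>
    ((hθs.differentiable (by norm_num)) z).hasDerivAt
  have hgs : ContDiff ℝ (⊤ : ℕ∞) (deriv θ) := (contDiff_infty_iff_deriv.mp hθs).2
  set Ψ := psiEquiv θ (deriv θ) hθ' with hΨ
  have hc2 : ContDiff ℝ (⊤ : ℕ∞) (fun p : E3 => (deriv θ p.2.1)⁻¹) :=
    ContDiff.inv (hgs.comp (by fun_prop)) (fun p => hθ' _)
  have hΨs : ContDiff ℝ (⊤ : ℕ∞) Ψ := by
    show ContDiff ℝ (⊤ : ℕ∞) (fun p : E3 =>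
      ((p.2.2 * cos (θ p.2.1) + p.1 * (deriv θ p.2.1)⁻¹ * sin (θ p.2.1),
        -p.2.2 * sin (θ p.2.1) + p.1 * (deriv θ p.2.1)⁻¹ * cos (θ p.2.1), p.2.1) : E3))
    fun_prop
  have hΨi : ContDiff ℝ (⊤ : ℕ∞) Ψ.symm := by
    show ContDiff ℝ (⊤ : ℕ∞) (fun q : E3 =>
      (((q.1 * sin (θ q.2.2) + q.2.1 * cos (θ q.2.2)) * deriv θ q.2.2, q.2.2,
        q.1 * cos (θ q.2.2) - q.2.1 * sin (θ q.2.2)) : E3))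
    fun_prop
  set B : E3 ≃L[ℝ] E3 := A.toContinuousLinearEquiv with hB
  let Φ : E3 ≃ₜ E3 :=
    { toEquiv := Ψ.trans A.toEquiv
      continuous_toFun := B.continuous.comp hΨs.continuous
      continuous_invFun := hΨi.continuous.comp B.symm.continuous }
  have hΦ : (Φ : E3 → E3) = fun p => B (Ψ p) := rfl
  refine ⟨Φ, ?_, ?_, fun _ => 1, fun _ => one_ne_zero, ?_⟩
  · rw [hΦ]; exact B.contDiff.comp hΨs
  · exact hΨi.comp B.symm.contDiff
  · intro p u
    have hΨd : Differentiable ℝ Ψ := hΨs.differentiable (by norm_num)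
    have h1 : fderiv ℝ (Φ : E3 → E3) p u = A (fderiv ℝ Ψ p u) := by
      have h2 : HasFDerivAt (fun p => B (Ψ p)) ((B : E3 →L[ℝ] E3).comp (fderiv ℝ Ψ p)) p :=
        B.hasFDerivAt.comp p (hΨd p).hasFDerivAt
      rw [hΦ, h2.fderiv]; rfl
    have h3 : V (Φ p) = A (cos (θ p.2.1), -sin (θ p.2.1), (0 : ℝ)) := hVA (Ψ p)
    rw [h1, h3, hA, one_mul]
    exact psi_deriv hθ' hdθ (hgs.differentiable (by norm_num)) hΨd p u
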